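/- Let C be a closed convex set in ℝⁿ, z ∈ ℝⁿ, and 0 < α < 1. Let p₁ = Proj(z, C) and p₂ = Proj(αz, C). Then ‖p₁‖ ≤ ‖p₂‖/α. -/

import Mathlib

/-! Adding `α` times the variational inequality `⟪z - p₁, p₂ - p₁⟫ ≤ 0` for `p₁` to the one for
`p₂`, namely `⟪α z - p₂, p₁ - p₂⟫ ≤ 0`, eliminates `z` and gives `⟪p₂ - α p₁, p₂ - p₁⟫ ≤ 0`.
By Cauchy–Schwarz, `(‖p₂‖ - α ‖p₁‖) (‖p₂‖ - ‖p₁‖) ≤ 0`; as `α < 1`, the smaller root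
`α ‖p₁‖` is a lower bound for `‖p₂‖`. -/

/-- The variational inequality characterising a nearest point of a convex set. -/
lemma inner_sub_le_zero_of_nearest {E : Type*} [NormedAddCommGroup E] [InnerProductSpace ℝ E]
    {C : Set E} (hC : Convex ℝ C) {u p : E} (hp : p ∈ C) (hmin : ∀ s ∈ C, ‖u - p‖ ≤ ‖u - s‖) :
    ∀ w ∈ C, inner ℝ (u - p) (w - p) ≤ 0 := by
  rw [← norm_eq_iInf_iff_real_inner_le_zero hC hp]
  haveI : Nonempty C := ⟨⟨p, hp⟩⟩
  refine le_antisymm (le_ciInf fun w => hmin w w.2) ?_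
  exact ciInf_le (f := fun w : C => ‖u - w‖) ⟨0, by rintro _ ⟨w, rfl⟩; exact norm_nonneg _⟩ ⟨p, hp⟩

theorem stmt5 {n : ℕ} (C : Set (EuclideanSpace ℝ (Fin n))) (hCcl : IsClosed C)
    (hCconv : Convex ℝ C) (z : EuclideanSpace ℝ (Fin n)) (α : ℝ) (hα : 0 < α) (hα1 : α < 1)
    (p₁ p₂ : EuclideanSpace ℝ (Fin n))
    (hp₁ : p₁ ∈ C ∧ ∀ s ∈ C, ‖z - p₁‖ ≤ ‖z - s‖)
    (hp₂ : p₂ ∈ C ∧ ∀ s ∈ C, ‖α • z - p₂‖ ≤ ‖α • z - s‖) :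
    ‖p₁‖ ≤ ‖p₂‖ / α := by
  have h₁ := inner_sub_le_zero_of_nearest hCconv hp₁.1 hp₁.2 p₂ hp₂.1
  have h₂ := inner_sub_le_zero_of_nearest hCconv hp₂.1 hp₂.2 p₁ hp₁.1
  have hcs := real_inner_le_norm p₁ p₂
  simp only [inner_sub_left, inner_sub_right, real_inner_smul_left,
    real_inner_self_eq_norm_sq, real_inner_comm p₁ p₂] at h₁ h₂ hcs
  have hprod : (‖p₂‖ - α * ‖p₁‖) * (‖p₂‖ - ‖p₁‖) ≤ 0 := by
    have h₁' := mul_le_mul_of_nonneg_left h₁ hα.le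
    have hcs' := mul_le_mul_of_nonneg_left hcs (by linarith : 0 ≤ 1 + α)
    nlinarith
  rw [le_div_iff₀ hα]
  by_contra! hlt
  have hle : α * ‖p₁‖ ≤ ‖p₁‖ := mul_le_of_le_one_left (norm_nonneg _) hα1.le
  have hpos := mul_pos_of_neg_of_neg (by linarith : ‖p₂‖ - α * ‖p₁‖ < 0)
    (by linarith : ‖p₂‖ - ‖p₁‖ < 0)
  linarith
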